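/- For every odd integer n ≥ 3, h(n,3) = (n+1)/2. -/

import Mathlib

/-!
For a finite graph, `mp G ≥ 3` holds exactly when there are distinct `a ~ b ~ c` with
`deg a ≤ deg b ≤ deg c` (`three_le_mp_iff`), so everything reduces to such triples.

Lower bound. Let `G` be 3-saturated on `n` vertices. Without isolated vertices the degree sum is at
least `n`. Suppose `v` is isolated. No other vertex `w` is isolated, since `vw` would then be a
component of `G + vw` without any such triple. Moreover some vertex has degree at least `2`:
otherwise the only vertex of degree `2` in `G + vw` is `w`, and no triple exists. Hence the degree
sum is again at least `n` (`card_le_sum_gdeg`). It is even and `n` is odd, so there are at least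
`(n + 1) / 2` edges.

Upper bound. The disjoint union of a path on three vertices and a matching (`extremal`) has
`(n + 1) / 2` edges. It has no triple, as its only vertex of degree `2` is a strict local maximum.
For nonadjacent `u`, `v` with `deg u ≤ deg v`, the vertex `u` has degree `1`; its neighbour
`x` has degree at most `2`, so `x, u, v` is a triple in `G + uv` (`triple_addEdge`).
-/

open SimpleGraph

variable {V : Type*}

/-- The degree of a vertex `v`: the number of neighbours of `v`. -/
noncomputable def gdeg (G : SimpleGraph V) (v : V) : ℕ := (G.neighborSet v).ncard

/-- A walk is degree monotone if the sequence of degrees of the vertices in the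
order in which they appear on the walk is monotone (non-decreasing or non-increasing). -/
def IsDegMonotone (G : SimpleGraph V) {u v : V} (p : G.Walk u v) : Prop :=
  (p.support.map (gdeg G)).Chain' (· ≤ ·) ∨ (p.support.map (gdeg G)).Chain' (· ≥ ·)

/-- `mp G` is the maximum number of vertices of a degree monotone path in `G`. -/
noncomputable def mp (G : SimpleGraph V) : ℕ :=
  sSup {n | ∃ (u v : V) (p : G.Walk u v), p.IsPath ∧ IsDegMonotone G p ∧ p.support.length = n}

/-- The graph obtained from `G` by adding the edge `uv`. -/
def addEdge (G : SimpleGraph V) (u v : V) : SimpleGraph V :=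
  G ⊔ fromEdgeSet {s(u, v)}

/-- `G` is saturated if adding any edge between non-adjacent vertices increases `mp`. -/
def Saturated (G : SimpleGraph V) : Prop :=
  ∀ u v : V, u ≠ v → ¬ G.Adj u v → mp G < mp (addEdge G u v)

/-- `G` is `k`-saturated if `mp G < k` and adding any edge between non-adjacent
vertices creates a degree monotone path on at least `k` vertices. -/
def KSaturated (k : ℕ) (G : SimpleGraph V) : Prop :=
  mp G < k ∧ ∀ u v : V, u ≠ v → ¬ G.Adj u v → k ≤ mp (addEdge G u v)

/-- `hSat n k` is the minimum number of edges of a `k`-saturated graph on `n` vertices. -/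
noncomputable def hSat (n k : ℕ) : ℕ :=
  sInf {m | ∃ G : SimpleGraph (Fin n), KSaturated k G ∧ G.edgeSet.ncard = m}

/-- There is a path `a, b, c` along which the degrees are non-decreasing. -/
def HasTriple (G : SimpleGraph V) : Prop :=
  ∃ a b c : V, G.Adj a b ∧ G.Adj b c ∧ a ≠ c ∧ gdeg G a ≤ gdeg G b ∧ gdeg G b ≤ gdeg G c

theorem three_le_mp_iff [Fintype V] (G : SimpleGraph V) : 3 ≤ mp G ↔ HasTriple G := by
  have hbdd : BddAbove {n | ∃ (u v : V) (p : G.Walk u v), p.IsPath ∧ IsDegMonotone G p ∧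
      p.support.length = n} := by
    refine ⟨Fintype.card V, ?_⟩
    rintro n ⟨u, v, p, hp, -, rfl⟩
    exact hp.support_nodup.length_le_card
  constructor
  · intro h
    have hne : {n | ∃ (u v : V) (p : G.Walk u v), p.IsPath ∧ IsDegMonotone G p ∧
        p.support.length = n}.Nonempty := by
      by_contra hne
      rw [Set.not_nonempty_iff_eq_empty] at hne
      rw [mp, hne] at h
      simp at h
    obtain ⟨u, v, p, hp, hm, hl⟩ := Nat.sSup_mem hne hbdd
    change p.support.length = mp G at hl
    rw [← hl] at h
    cases p with
    | nil => simp at h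
    | cons hab q =>
      cases q with
      | nil => simp at h
      | @cons _ c _ hbc r =>
        have hac : u ≠ c := by
          rintro rfl
          have := hp.support_nodup
          simp at this
        unfold IsDegMonotone at hm
        rw [Walk.support_cons, Walk.support_cons, ← Walk.cons_tail_support r] at hm
        simp only [List.map_cons] at hm
        rcases hm with hm | hm
        · obtain ⟨h1, hm⟩ := List.isChain_cons_cons.1 hm
          exact ⟨_, _, _, hab, hbc, hac, h1, (List.isChain_cons_cons.1 hm).1⟩
        · obtain ⟨h1, hm⟩ := List.isChain_cons_cons.1 hm
          exact ⟨_, _, _, hbc.symm, hab.symm, hac.symm, (List.isChain_cons_cons.1 hm).1, h1⟩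
  · rintro ⟨a, b, c, hab, hbc, hac, h1, h2⟩
    refine le_csSup hbdd ⟨a, c, .cons hab (.cons hbc .nil), ?_, ?_, ?_⟩
    · simp [hab.ne, hbc.ne, hac]
    · left
      exact .cons_cons h1 (.cons_cons h2 (.singleton _))
    · simp

theorem addEdge_adj (G : SimpleGraph V) (u v x y : V) :
    (addEdge G u v).Adj x y ↔ G.Adj x y ∨ (x ≠ y ∧ (x = u ∧ y = v ∨ x = v ∧ y = u)) := by
  simp [addEdge]
  tauto

theorem addEdge_comm (G : SimpleGraph V) (u v : V) : addEdge G u v = addEdge G v u := by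
  ext x y
  simp only [addEdge_adj]
  tauto

theorem gdeg_addEdge_left [Finite V] (G : SimpleGraph V) {u v : V} (huv : u ≠ v)
    (h : ¬ G.Adj u v) : gdeg (addEdge G u v) u = gdeg G u + 1 := by
  have : (addEdge G u v).neighborSet u = insert v (G.neighborSet u) := by
    ext y
    simp only [mem_neighborSet, addEdge_adj, Set.mem_insert_iff]
    grind
  rw [gdeg, this, Set.ncard_insert_of_notMem (by simpa using h) (Set.toFinite _), gdeg]

theorem gdeg_addEdge_right [Finite V] (G : SimpleGraph V) {u v : V} (huv : u ≠ v)
    (h : ¬ G.Adj u v) : gdeg (addEdge G u v) v = gdeg G v + 1 := by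
  rw [addEdge_comm]
  exact gdeg_addEdge_left G huv.symm fun h' => h h'.symm

theorem gdeg_addEdge_of_ne (G : SimpleGraph V) {u v x : V} (hu : x ≠ u) (hv : x ≠ v) :
    gdeg (addEdge G u v) x = gdeg G x := by
  have : (addEdge G u v).neighborSet x = G.neighborSet x := by
    ext y
    simp only [mem_neighborSet, addEdge_adj]
    grind
  rw [gdeg, this, gdeg]

theorem triple_addEdge [Finite V] (G : SimpleGraph V) {u v x : V} (huv : u ≠ v)
    (h : ¬ G.Adj u v) (hle : gdeg G u ≤ gdeg G v) (hx : G.Adj x u)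
    (hxd : gdeg G x ≤ gdeg G u + 1) : HasTriple (addEdge G u v) := by
  have hxv : x ≠ v := by
    rintro rfl
    exact h hx.symm
  refine ⟨x, u, v, ?_, ?_, hxv, ?_, ?_⟩
  · rw [addEdge_adj]
    exact Or.inl hx
  · rw [addEdge_adj]
    exact Or.inr ⟨huv, Or.inl ⟨rfl, rfl⟩⟩
  · rwa [gdeg_addEdge_of_ne G hx.ne hxv, gdeg_addEdge_left G huv h]
  · rw [gdeg_addEdge_left G huv h, gdeg_addEdge_right G huv h]
    omega

theorem gdeg_eq_zero_iff [Finite V] (G : SimpleGraph V) (v : V) :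
    gdeg G v = 0 ↔ ∀ x, ¬ G.Adj v x := by
  rw [gdeg, Set.ncard_eq_zero (Set.toFinite _), Set.eq_empty_iff_forall_notMem]
  rfl

theorem two_le_gdeg [Finite V] (G : SimpleGraph V) {a b c : V} (hab : G.Adj a b)
    (hbc : G.Adj b c) (hac : a ≠ c) : 2 ≤ gdeg G b := by
  rw [← Set.ncard_pair hac]
  refine Set.ncard_le_ncard ?_ (Set.toFinite _)
  rintro x (rfl | rfl)
  · exact hab.symm
  · exact hbc

theorem sum_gdeg [Fintype V] (G : SimpleGraph V) : ∑ v, gdeg G v = 2 * G.edgeSet.ncard := by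
  classical
  have h := G.sum_degrees_eq_twice_card_edges
  rw [← coe_edgeFinset, Set.ncard_coe_finset, ← h]
  refine Finset.sum_congr rfl fun v _ => ?_
  rw [gdeg, Set.ncard_eq_toFinset_card', ← neighborFinset_def, card_neighborFinset_eq_degree]

theorem isolated_unique [Finite V] {G : SimpleGraph V} (h3 : ¬ HasTriple G)
    (hs : ∀ u v : V, u ≠ v → ¬ G.Adj u v → HasTriple (addEdge G u v)) {v w : V}
    (hv : gdeg G v = 0) (hw : gdeg G w = 0) : v = w := by
  by_contra hvw
  rw [gdeg_eq_zero_iff] at hv hw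
  obtain ⟨a, b, c, hab, hbc, hac, h1, h2⟩ := hs v w hvw (hv w)
  rw [addEdge_adj] at hab hbc
  have hv' : ∀ x, ¬ G.Adj x v := fun x h => hv x h.symm
  have hw' : ∀ x, ¬ G.Adj x w := fun x h => hw x h.symm
  -- the component `vw` has only two vertices, so it cannot meet the triple
  have key : (a ≠ v ∧ a ≠ w) ∧ (b ≠ v ∧ b ≠ w) ∧ (c ≠ v ∧ c ≠ w) := by grind
  obtain ⟨⟨av, aw⟩, ⟨bv, bw⟩, cv, cw⟩ := key
  rw [gdeg_addEdge_of_ne G av aw, gdeg_addEdge_of_ne G bv bw] at h1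
  rw [gdeg_addEdge_of_ne G bv bw, gdeg_addEdge_of_ne G cv cw] at h2
  exact h3 ⟨a, b, c, by tauto, by tauto, hac, h1, h2⟩

theorem exists_two_le_gdeg [Finite V] {G : SimpleGraph V}
    (hs : ∀ u v : V, u ≠ v → ¬ G.Adj u v → HasTriple (addEdge G u v)) {v w : V} (hvw : v ≠ w)
    (hv : gdeg G v = 0) : ∃ x, 2 ≤ gdeg G x := by
  by_contra! hlt
  have hv0 := (gdeg_eq_zero_iff G v).1 hv
  obtain ⟨a, b, c, hab, hbc, hac, h1, h2⟩ := hs v w hvw (hv0 w)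
  have hb := two_le_gdeg _ hab hbc hac
  -- `w` is the only vertex that can have degree `2` in `G + vw`
  have key : ∀ x, 2 ≤ gdeg (addEdge G v w) x → x = w := by
    intro x hx
    by_contra hxw
    by_cases hxv : x = v
    · subst hxv
      rw [gdeg_addEdge_left G hvw (hv0 w)] at hx
      omega
    · rw [gdeg_addEdge_of_ne G hxv hxw] at hx
      have := hlt x
      omega
  exact hbc.ne ((key b hb).trans (key c (hb.trans h2)).symm)

theorem card_le_sum_gdeg [Fintype V] (hV : 1 < Fintype.card V) {G : SimpleGraph V}
    (h3 : ¬ HasTriple G)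
    (hs : ∀ u v : V, u ≠ v → ¬ G.Adj u v → HasTriple (addEdge G u v)) :
    Fintype.card V ≤ ∑ v, gdeg G v := by
  classical
  by_cases h : ∃ v, gdeg G v = 0
  · obtain ⟨v, hv⟩ := h
    have : Nontrivial V := Fintype.one_lt_card_iff_nontrivial.1 hV
    obtain ⟨w, hwv⟩ := exists_ne v
    obtain ⟨x, hx⟩ := exists_two_le_gdeg hs hwv.symm hv
    have hxv : x ≠ v := by
      rintro rfl
      omega
    -- compare with the weight that is `0` at `v`, `2` at `x` and `1` elsewhere
    have hle : ∀ y ∈ Finset.univ, 1 + (if y = x then 1 else 0) ≤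
        gdeg G y + (if y = v then 1 else 0) := by
      intro y _
      by_cases hyv : y = v
      · simp [hyv, hxv.symm]
      · have : gdeg G y ≠ 0 := fun h0 => hyv (isolated_unique h3 hs h0 hv)
        by_cases hyx : y = x
        · subst hyx
          simp [hyv]
          omega
        · simp [hyv, hyx]
          omega
    have := Finset.sum_le_sum hle
    simpa [Finset.sum_add_distrib] using this
  · push Not at h
    have : ∑ _v : V, 1 ≤ ∑ v, gdeg G v :=
      Finset.sum_le_sum fun v _ => Nat.one_le_iff_ne_zero.2 (h v)
    simpa using this

/-- For odd `n`, the disjoint union of the path `0, 1, 2` and the edges `{3, 4}, {5, 6}, …`: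
the vertices `2t + 1` and `2t + 2` are joined for every `t`, and so are `0` and `1`. -/
def extremal (n : ℕ) : SimpleGraph (Fin n) where
  Adj i j := i ≠ j ∧ ((i.val + 1) / 2 = (j.val + 1) / 2 ∨ i.val + j.val = 1)
  symm := ⟨fun i j h => ⟨h.1.symm, by omega⟩⟩
  loopless := ⟨fun i h => h.1 rfl⟩

theorem extremal_adj {n : ℕ} (i j : Fin n) : (extremal n).Adj i j ↔
    i.val ≠ j.val ∧ ((i.val + 1) / 2 = (j.val + 1) / 2 ∨ i.val + j.val = 1) := by
  simp [extremal, Fin.ext_iff]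

theorem gdeg_extremal {n : ℕ} (hn : 3 ≤ n) (ho : Odd n) (i : Fin n) :
    gdeg (extremal n) i = 1 + if i = ⟨1, by omega⟩ then 1 else 0 := by
  obtain ⟨k, rfl⟩ := ho
  split_ifs with hi
  · have : (extremal (2 * k + 1)).neighborSet i = {⟨0, by omega⟩, ⟨2, by omega⟩} := by
      ext j
      simp only [mem_neighborSet, extremal_adj, Set.mem_insert_iff, Set.mem_singleton_iff,
        Fin.ext_iff, hi]
      omega
    rw [gdeg, this, Set.ncard_pair (by simp)]
  · rw [Fin.ext_iff] at hi
    simp only at hi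
    rw [gdeg, Set.ncard_eq_one]
    refine ⟨⟨if i.val = 0 then 1 else if i.val % 2 = 1 then i.val + 1 else i.val - 1, ?_⟩, ?_⟩
    · have := i.isLt
      split_ifs <;> omega
    · ext j
      simp only [mem_neighborSet, extremal_adj, Set.mem_singleton_iff, Fin.ext_iff]
      split_ifs <;> omega

theorem exists_adj_extremal {n : ℕ} (hn : 3 ≤ n) (ho : Odd n) (i : Fin n) :
    ∃ x, (extremal n).Adj x i := by
  by_contra! h
  have h0 := (gdeg_eq_zero_iff (extremal n) i).2 fun x hx => h x hx.symm
  rw [gdeg_extremal hn ho] at h0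
  omega

theorem kSaturated_extremal {n : ℕ} (hn : 3 ≤ n) (ho : Odd n) : KSaturated 3 (extremal n) := by
  have hd := gdeg_extremal hn ho
  constructor
  · rw [← not_le, three_le_mp_iff]
    rintro ⟨a, b, c, hab, hbc, hac, h1, h2⟩
    have hb := two_le_gdeg _ hab hbc hac
    have hc := hb.trans h2
    have := hbc.ne
    rw [hd] at hb hc
    grind
  · intro u v huv h
    rw [three_le_mp_iff]
    have key : ∀ u v : Fin n, u ≠ v → ¬ (extremal n).Adj u v →
        gdeg (extremal n) u ≤ gdeg (extremal n) v → HasTriple (addEdge (extremal n) u v) := by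
      intro u v huv h hle
      obtain ⟨x, hx⟩ := exists_adj_extremal hn ho u
      refine triple_addEdge _ huv h hle hx ?_
      rw [hd, hd]
      split_ifs <;> omega
    rcases le_total (gdeg (extremal n) u) (gdeg (extremal n) v) with hle | hle
    · exact key u v huv h hle
    · rw [addEdge_comm]
      exact key v u huv.symm (fun h' => h h'.symm) hle

theorem ncard_edgeSet_extremal {n : ℕ} (hn : 3 ≤ n) (ho : Odd n) :
    (extremal n).edgeSet.ncard = (n + 1) / 2 := by
  have h := sum_gdeg (extremal n)
  simp only [gdeg_extremal hn ho, Finset.sum_add_distrib] at h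
  simp at h
  omega

theorem stmt_14 (n : ℕ) (hn : 3 ≤ n) (ho : Odd n) : hSat n 3 = (n + 1) / 2 := by
  have hmem : (n + 1) / 2 ∈
      {m | ∃ G : SimpleGraph (Fin n), KSaturated 3 G ∧ G.edgeSet.ncard = m} :=
    ⟨extremal n, kSaturated_extremal hn ho, ncard_edgeSet_extremal hn ho⟩
  refine le_antisymm (Nat.sInf_le hmem) (le_csInf ⟨_, hmem⟩ ?_)
  rintro m ⟨G, ⟨h3, hs⟩, rfl⟩
  rw [← not_le, three_le_mp_iff] at h3
  simp only [three_le_mp_iff] at hs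
  have h := card_le_sum_gdeg (by simp; omega) h3 hs
  rw [sum_gdeg, Fintype.card_fin] at h
  omega
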